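/- arXiv:1806.00939 — 2 statements merged into one kernel-verified Lean document; each statement's English description precedes it below -/
import Mathlib

section
/- Let F be a field, M, K, T, S, A, N, d natural numbers with d ≥ 1 and (K+T−1)d + S + 2A + 1 ≤ N. Let p be a multivariate polynomial in M variables over F of total degree at most d, let β_1, …, β_{K+T} ∈ F be pairwise distinct, and α_1, …, α_N ∈ F be pairwise distinct. For X ∈ (F^M)^K and Z ∈ (F^M)^T, let u_{X,Z} : F → F^M be the unique coordinatewise polynomial map of degree at most K+T−1 with u_{X,Z}(β_j) = X_j for j ∈ {1,…,K} and u_{X,Z}(β_{K+t}) = Z_t for t ∈ {1,…,T}. Then for every subset 𝒦 ⊆ {1,…,N} with |𝒦| ≥ N − S, every reported vector ỹ : 𝒦 → F, and any (X, Z) and (X′, Z′) such that |{i ∈ 𝒦 : ỹ_i ≠ p(u_{X,Z}(α_i))}| ≤ A and |{i ∈ 𝒦 : ỹ_i ≠ p(u_{X′,Z′}(α_i))}| ≤ A, one has p(X_j) = p(X′_j) for every j ∈ {1,…,K}. (Hence LCC is simultaneously S-resilient and A-secure whenever (K+T−1)deg f + S + 2A + 1 ≤ N.) -/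
/-!
Composing `p` with the encoding curve gives a univariate polynomial of degree at most
`(K + T - 1) * d`, whose values at the `α i` are the correct results and whose values at the `β j`
are the `p (X j)`. The results thus form a Reed–Solomon codeword: two distinct ones differ in at
least `#𝒦 - (K + T - 1) * d > 2 * A` positions of `𝒦`, so at most one of them lies within Hamming
distance `A` of the reported vector.
-/

open Polynomial Finset

section HammingDistance

variable {ι γ : Type*}

/-- The Hamming distance between the restrictions of `a` and `b` to the finite set `s`: it counts
the errors among the workers in `s`. Taking the cardinality with `Set.ncard` avoids having to decide
equality in `γ`. -/
noncomputable def hammingDistOn (s : Finset ι) (a b : ι → γ) : ℕ :=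
  Set.ncard {i | i ∈ s ∧ a i ≠ b i}

theorem hammingDistOn_eq_card_filter [DecidableEq γ] (s : Finset ι) (a b : ι → γ) :
    hammingDistOn s a b = #{i ∈ s | a i ≠ b i} := by
  rw [hammingDistOn, ← Set.ncard_coe_finset, coe_filter]

theorem hammingDistOn_triangle_left (s : Finset ι) (a b y : ι → γ) :
    hammingDistOn s a b ≤ hammingDistOn s y a + hammingDistOn s y b := by
  classical
  simp only [hammingDistOn_eq_card_filter]
  have differ_subset : {i ∈ s | a i ≠ b i} ⊆ {i ∈ s | y i ≠ a i} ∪ {i ∈ s | y i ≠ b i} := by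
    grind
  exact (card_le_card differ_subset).trans (card_union_le _ _)

end HammingDistance

section ReedSolomon

variable {R ι : Type*} [CommRing R] [IsDomain R] {s : Finset ι} {α : ι → R} {f g : R[X]} {n : ℕ}

theorem card_le_add_hammingDistOn_eval (hα : Set.InjOn α s) (hf : f.natDegree ≤ n)
    (hg : g.natDegree ≤ n) (hfg : f ≠ g) :
    #s ≤ n + hammingDistOn s (fun i => f.eval (α i)) (fun i => g.eval (α i)) := by
  classical
  have agree_le : #{i ∈ s | f.eval (α i) = g.eval (α i)} ≤ n := by
    by_contra! hn
    refine hfg (eq_of_degree_sub_lt_of_eval_index_eq {i ∈ s | f.eval (α i) = g.eval (α i)}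
      (hα.mono (filter_subset _ s)) ?_ fun i hi => (mem_filter.mp hi).2)
    calc (f - g).degree ≤ n :=
          degree_le_of_natDegree_le (natDegree_sub_le_of_le hf hg |>.trans_eq (max_self n))
      _ < #{i ∈ s | f.eval (α i) = g.eval (α i)} := by exact_mod_cast hn
  rw [hammingDistOn_eq_card_filter,
    ← card_filter_add_card_filter_not (s := s) fun i => f.eval (α i) = g.eval (α i)]
  gcongr

theorem eq_of_hammingDistOn_eval_le {A : ℕ} (hα : Set.InjOn α s) (hf : f.natDegree ≤ n)
    (hg : g.natDegree ≤ n) (hs : n + 2 * A < #s) {y : ι → R}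
    (hyf : hammingDistOn s y (fun i => f.eval (α i)) ≤ A)
    (hyg : hammingDistOn s y (fun i => g.eval (α i)) ≤ A) : f = g := by
  by_contra hfg
  have min_distance := card_le_add_hammingDistOn_eval hα hf hg hfg
  have triangle := hammingDistOn_triangle_left s
    (fun i => f.eval (α i)) (fun i => g.eval (α i)) y
  omega

end ReedSolomon

section LagrangeEncoding

variable {F κ σ : Type*} [Field F] [DecidableEq κ] {s : Finset κ} {β : κ → F}

/-- The Lagrange encoding curve `u : F → F^σ` with `u (β j) = V j` for `j ∈ s`, provided `β`
is injective on `s`. Data and keys are not distinguished: both are values of `V`. -/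
noncomputable def lagrangeEncode (s : Finset κ) (β : κ → F) (V : κ → σ → F) (x : F) : σ → F :=
  fun m => (Lagrange.interpolate s β fun j => V j m).eval x

/-- The univariate polynomial `p ∘ u`, where `u` is the Lagrange encoding curve of `V`; its values
at the evaluation points of the workers are the correct results. -/
noncomputable def lagrangeResult (s : Finset κ) (β : κ → F) (V : κ → σ → F)
    (p : MvPolynomial σ F) : F[X] :=
  MvPolynomial.aeval (fun m => Lagrange.interpolate s β fun j => V j m) p

theorem lagrangeEncode_node (hβ : Set.InjOn β s) (V : κ → σ → F) {j : κ} (hj : j ∈ s) :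
    lagrangeEncode s β V (β j) = V j :=
  funext fun m => Lagrange.eval_interpolate_at_node (fun j => V j m) hβ hj

theorem eval_lagrangeResult (s : Finset κ) (β : κ → F) (V : κ → σ → F) (p : MvPolynomial σ F)
    (x : F) :
    (lagrangeResult s β V p).eval x = MvPolynomial.eval (lagrangeEncode s β V x) p := by
  unfold lagrangeResult lagrangeEncode
  simpa only [coe_aeval_eq_eval, MvPolynomial.aeval_eq_eval] using
    MvPolynomial.comp_aeval_apply (fun m => Lagrange.interpolate s β fun j => V j m)
      (Polynomial.aeval x) p

theorem eval_lagrangeResult_node (hβ : Set.InjOn β s) (V : κ → σ → F) (p : MvPolynomial σ F)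
    {j : κ} (hj : j ∈ s) :
    (lagrangeResult s β V p).eval (β j) = MvPolynomial.eval (V j) p := by
  rw [eval_lagrangeResult, lagrangeEncode_node hβ V hj]

theorem natDegree_lagrangeResult_le (hβ : Set.InjOn β s) (V : κ → σ → F) {p : MvPolynomial σ F}
    {d : ℕ} (hp : p.totalDegree ≤ d) :
    (lagrangeResult s β V p).natDegree ≤ (#s - 1) * d := by
  rw [mul_comm]
  exact MvPolynomial.aeval_natDegree_le p hp _ fun m =>
    natDegree_le_of_degree_le (Lagrange.degree_interpolate_le (fun j => V j m) hβ)

theorem lcc_resilient_and_secure_general {ι : Type*} {A d : ℕ} {p : MvPolynomial σ F}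
    (hp : p.totalDegree ≤ d) (hβ : Set.InjOn β s) {α : ι → F} {𝒦 : Finset ι}
    (hα : Set.InjOn α 𝒦) (h𝒦 : (#s - 1) * d + 2 * A < #𝒦) {y : ι → F} {V V' : κ → σ → F}
    (hA : hammingDistOn 𝒦 y (fun i => MvPolynomial.eval (lagrangeEncode s β V (α i)) p) ≤ A)
    (hA' : hammingDistOn 𝒦 y (fun i => MvPolynomial.eval (lagrangeEncode s β V' (α i)) p) ≤ A)
    {j : κ} (hj : j ∈ s) :
    MvPolynomial.eval (V j) p = MvPolynomial.eval (V' j) p := by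
  simp only [← eval_lagrangeResult] at hA hA'
  have result_eq : lagrangeResult s β V p = lagrangeResult s β V' p :=
    eq_of_hammingDistOn_eval_le hα (natDegree_lagrangeResult_le hβ V hp)
      (natDegree_lagrangeResult_le hβ V' hp) h𝒦 hA hA'
  rw [← eval_lagrangeResult_node hβ V p hj, result_eq, eval_lagrangeResult_node hβ V' p hj]

end LagrangeEncoding

/-- **Simultaneous S-resiliency and A-security of LCC.**
Suppose `(K+T−1)d + S + 2A + 1 ≤ N`, `p` has total degree at most `d`, and `u_{X,Z}` is
the Lagrange interpolant of degree `≤ K+T−1` through the distinct nodes `β` with values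
`X` on the first `K` nodes and keys `Z` on the last `T`.  If a reported vector `ỹ`
differs from the true worker results `p(u_{X,Z}(α_i))` in at most `A` positions of a set
`𝒦` of at least `N − S` workers, and likewise for `(X',Z')`, then `p(X_j) = p(X'_j)`
for every `j`. -/
theorem lcc_resilient_and_secure (F : Type*) [Field F] (M K T S A N d : ℕ) (hd : 1 ≤ d)
    (hN : (K + T - 1) * d + S + 2 * A + 1 ≤ N)
    (p : MvPolynomial (Fin M) F) (hp : p.totalDegree ≤ d)
    (β : Fin (K + T) → F) (hβ : Function.Injective β)
    (α : Fin N → F) (hα : Function.Injective α)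
    (𝒦 : Finset (Fin N)) (h𝒦 : N - S ≤ 𝒦.card)
    (ytil : Fin N → F)
    (X X' : Fin K → Fin M → F) (Z Z' : Fin T → Fin M → F)
    (hA : Set.ncard {i : Fin N | i ∈ 𝒦 ∧
      ytil i ≠ MvPolynomial.eval (fun m =>
        (Lagrange.interpolate Finset.univ β (fun j => Fin.append X Z j m)).eval (α i)) p} ≤ A)
    (hA' : Set.ncard {i : Fin N | i ∈ 𝒦 ∧
      ytil i ≠ MvPolynomial.eval (fun m =>
        (Lagrange.interpolate Finset.univ β (fun j => Fin.append X' Z' j m)).eval (α i)) p} ≤ A) :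
    ∀ j : Fin K, MvPolynomial.eval (X j) p = MvPolynomial.eval (X' j) p := by
  intro j
  simpa only [Fin.append_left] using lcc_resilient_and_secure_general hp hβ.injOn hα.injOn
    (by rw [card_fin]; omega) hA hA' (mem_univ (Fin.castAdd T j))
end

section
/- Let F be a field whose characteristic is 0 or strictly greater than d, and let p be a multivariate polynomial in M variables over F of total degree exactly d ≥ 1. Define f′ as the formal polynomial in the d·M variables comprising Z_1, …, Z_d ∈ F^M given by f′(Z_1, …, Z_d) = Σ_{S ⊆ {1,…,d}} (−1)^{|S|} p(Σ_{j∈S} Z_j), where p(Σ_{j∈S} Z_j) is obtained by substituting the coordinates of Σ_{j∈S} Z_j into p. Then f′ is a nonzero polynomial. -/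
/-!
Restrict the polarization to the diagonal `Z_1 = ⋯ = Z_d = X`. The summand of `S` becomes
`(-1)^|S| p(|S| X)`, whose degree `d` part is `(-1)^|S| |S|^d p_d`, where `p_d` is the degree `d`
part of `p`. The alternating sum of the `|S|^d` is, up to sign, the `d`-th finite difference of
`x ↦ x^d`, namely `d!`. Hence the degree `d` part of the restriction is `(-1)^d d! p_d`.
-/

open MvPolynomial
open scoped Nat

theorem sum_neg_one_pow_card_mul_card_pow (R : Type*) [CommRing R] (ι : Type*) [Fintype ι] :
    ∑ S : Finset ι, (-1 : R) ^ S.card * (S.card : R) ^ Fintype.card ι =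
      (-1) ^ Fintype.card ι * ((Fintype.card ι)! : R) := by
  set n := Fintype.card ι
  have sign_mul_sign_sub {k : ℕ} (hk : k ≤ n) : (-1 : R) ^ n * (-1) ^ (n - k) = (-1) ^ k := by
    rw [← pow_add, show n + (n - k) = k + 2 * (n - k) by lia, pow_add, pow_mul, neg_one_sq,
      one_pow, mul_one]
  have iterated_difference :
      ∑ k ∈ Finset.range (n + 1), (-1 : R) ^ (n - k) * n.choose k * (k : R) ^ n = (n ! : R) := by
    simpa [fwdDiff_iter_eq_sum_shift] using congrFun (fwdDiff_iter_eq_factorial (R := R) (n := n)) 0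
  calc ∑ S : Finset ι, (-1 : R) ^ S.card * (S.card : R) ^ n
      = ∑ k ∈ Finset.range (n + 1), n.choose k • ((-1 : R) ^ k * (k : R) ^ n) := by
        simpa only [Finset.powerset_univ, Finset.card_univ] using
          Finset.sum_powerset_apply_card (fun k ↦ (-1 : R) ^ k * (k : R) ^ n)
            (x := (Finset.univ : Finset ι))
    _ = (-1) ^ n *
          ∑ k ∈ Finset.range (n + 1), (-1 : R) ^ (n - k) * n.choose k * (k : R) ^ n := by
        rw [Finset.mul_sum]
        refine Finset.sum_congr rfl fun k hk ↦ ?_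
        rw [← sign_mul_sign_sub (Finset.mem_range_succ_iff.1 hk), nsmul_eq_mul]
        ring
    _ = (-1) ^ n * (n ! : R) := by rw [iterated_difference]

theorem natCast_factorial_ne_zero_of_ringChar_eq_zero_or_lt {R : Type*} [Semiring R]
    [NoZeroDivisors R] [Nontrivial R] {n : ℕ} (h : ringChar R = 0 ∨ n < ringChar R) :
    (n ! : R) ≠ 0 := by
  rw [Ne, ringChar.spec]
  rcases CharP.char_is_prime_or_zero R (ringChar R) with prime | zero
  · rw [prime.dvd_factorial, not_le]
    exact h.resolve_left prime.ne_zero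
  · rw [zero, zero_dvd_iff]
    exact n.factorial_ne_zero

section CommSemiring

variable {R σ : Type*} [CommSemiring R]

theorem homogeneousComponent_totalDegree_ne_zero {p : MvPolynomial σ R} (hp : p ≠ 0) :
    homogeneousComponent p.totalDegree p ≠ 0 := by
  obtain ⟨s, hs, degree_s⟩ :=
    p.support.exists_mem_eq_sup (support_nonempty.2 hp) (fun s ↦ s.sum fun _ e ↦ e)
  have degree_eq_totalDegree : s.degree = p.totalDegree := degree_s.symm
  refine ne_zero_iff.2 ⟨s, ?_⟩
  rw [coeff_homogeneousComponent, if_pos degree_eq_totalDegree]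
  exact mem_support_iff.1 hs

theorem aeval_smul_X_monomial (c : R) (s : σ →₀ ℕ) (a : R) :
    aeval (fun i ↦ c • (X i : MvPolynomial σ R)) (monomial s a) = c ^ s.degree • monomial s a := by
  rw [aeval_monomial, monomial_eq]
  simp only [algebraMap_eq, smul_pow, Finsupp.prod, Finset.prod_smul,
    Finset.prod_pow_eq_pow_sum, Finsupp.degree_apply, mul_smul_comm]

theorem homogeneousComponent_aeval_smul_X (n : ℕ) (c : R) (p : MvPolynomial σ R) :
    homogeneousComponent n (aeval (fun i ↦ c • (X i : MvPolynomial σ R)) p) =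
      c ^ n • homogeneousComponent n p := by
  induction p using MvPolynomial.induction_on' with
  | monomial s a =>
    rw [aeval_smul_X_monomial, map_smul]
    by_cases hs : s.degree = n
    · rw [hs]
    · rw [homogeneousComponent_of_mem (isHomogeneous_monomial a rfl), if_neg (Ne.symm hs),
        smul_zero, smul_zero]
  | add p q hp hq => rw [map_add, map_add, map_add, hp, hq, smul_add]

end CommSemiring

section Polarization

variable {R σ : Type*} [CommRing R] (ι : Type*) [Fintype ι]

/-- The polarization `∑_{S ⊆ ι} (-1)^|S| p(∑_{j ∈ S} Z_j)` of a polynomial `p`, in one vector of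
variables `Z_j` for each `j : ι`; the variable `(j, i)` is the coordinate `i` of `Z_j`. -/
noncomputable def polarization (p : MvPolynomial σ R) : MvPolynomial (ι × σ) R :=
  ∑ S : Finset ι, (-1 : R) ^ S.card • aeval (fun i ↦ ∑ j ∈ S, X (j, i)) p

theorem rename_snd_polarization (p : MvPolynomial σ R) :
    rename Prod.snd (polarization ι p) =
      ∑ S : Finset ι, (-1 : R) ^ S.card • aeval (fun i ↦ (S.card : R) • X i) p := by
  simp only [polarization, map_sum, map_smul, comp_aeval_apply, rename_X, Finset.sum_const,
    Nat.cast_smul_eq_nsmul]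

theorem homogeneousComponent_rename_snd_polarization (p : MvPolynomial σ R) :
    homogeneousComponent (Fintype.card ι) (rename Prod.snd (polarization ι p)) =
      (-1 : R) ^ Fintype.card ι •
        ((Fintype.card ι)! : R) • homogeneousComponent (Fintype.card ι) p := by
  simp only [rename_snd_polarization, map_sum, map_smul, homogeneousComponent_aeval_smul_X,
    smul_smul, ← Finset.sum_smul, sum_neg_one_pow_card_mul_card_pow]

variable {ι}

theorem polarization_nonzero_general {p : MvPolynomial σ R}
    (hp : ((Fintype.card ι)! : R) • homogeneousComponent (Fintype.card ι) p ≠ 0) :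
    polarization ι p ≠ 0 := by
  intro polarization_eq_zero
  have diagonal := homogeneousComponent_rename_snd_polarization ι p
  rw [polarization_eq_zero, map_zero, map_zero] at diagonal
  exact hp (((isUnit_one.neg.pow _).smul_eq_zero).1 diagonal.symm)

end Polarization

/-- **Nonvanishing of the polarization (Lemma 3).**
If the characteristic of `F` is `0` or greater than `d`, and `p` has total degree exactly
`d ≥ 1`, then the polarization `f'(Z_1,…,Z_d) = Σ_{S ⊆ [d]} (−1)^{|S|} p(Σ_{j∈S} Z_j)`,
viewed as a formal polynomial in the `d·M` variables `(j, m) ↦ Z_{j,m}`, is nonzero. -/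
theorem polarization_nonzero (F : Type*) [Field F] (M d : ℕ) (hd : 1 ≤ d)
    (hchar : ringChar F = 0 ∨ d < ringChar F)
    (p : MvPolynomial (Fin M) F) (hp : p.totalDegree = d) :
    (∑ S : Finset (Fin d),
        (-1 : F) ^ S.card •
          MvPolynomial.aeval (fun m : Fin M => ∑ j ∈ S, MvPolynomial.X (j, m)) p :
      MvPolynomial (Fin d × Fin M) F) ≠ 0 := by
  subst hp
  have p_ne_zero : p ≠ 0 := by rintro rfl; simp at hd
  apply polarization_nonzero_general
  rw [Fintype.card_fin]
  exact smul_ne_zero (natCast_factorial_ne_zero_of_ringChar_eq_zero_or_lt hchar)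
    (homogeneousComponent_totalDegree_ne_zero p_ne_zero)
end
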